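/- arXiv:1306.5348 — 7 statements merged into one kernel-verified Lean document; each statement's English description precedes it below -/
import Mathlib

section
/- Let A be an associative unital algebra over a field k of prime characteristic p, and let u ∈ A with (u − 1)^p = 0. Then the truncated logarithm L(u) is p-nilpotent: L(u)^p = 0. -/
/-- The truncated logarithm `L(u) = ∑_{i=1}^{p-1} ((-1)^{i+1}/i) (u-1)^i`. -/
noncomputable def truncLog (k : Type*) [Field k] {A : Type*} [Ring A] [Algebra k A]
    (p : ℕ) (u : A) : A :=
  ∑ i ∈ Finset.Icc 1 (p - 1), (((-1 : k) ^ (i + 1)) / (i : k)) • (u - 1) ^ i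

/-! `L(u)` is the value at `u - 1` of a polynomial without constant term. In the commutative ring
`k[X]` the divisibility `X ∣ f` gives `X ^ n ∣ f ^ n`, and evaluation at `u - 1` turns the divisor
into `(u - 1) ^ n = 0`. -/

open Polynomial

theorem map_pow_eq_zero_of_dvd {F M N : Type*} [CommMonoid M] [MonoidWithZero N]
    [FunLike F M N] [MonoidHomClass F M N] (φ : F) {a b : M} {n : ℕ} (hab : a ∣ b)
    (ha : φ a ^ n = 0) : φ b ^ n = 0 := by
  have hpow : φ (a ^ n) ∣ φ (b ^ n) := map_dvd φ (pow_dvd_pow_of_dvd hab n)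
  rwa [map_pow, map_pow, ha, zero_dvd_iff] at hpow

/-- The polynomial whose value at `u - 1` is the truncated logarithm of `u`. A coefficient whose
index `i` vanishes in `k` is `0`, by the convention `x / 0 = 0`. -/
noncomputable def truncLogPoly (k : Type*) [Field k] (p : ℕ) : k[X] :=
  ∑ i ∈ Finset.Icc 1 (p - 1), monomial i ((-1) ^ (i + 1) / (i : k))

section

variable (k : Type*) [Field k] (p : ℕ)

theorem X_dvd_truncLogPoly : X ∣ truncLogPoly k p :=
  Finset.dvd_sum fun i hi => by
    have hi_ne : i ≠ 0 := Nat.one_le_iff_ne_zero.mp (Finset.mem_Icc.mp hi).1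
    rw [← C_mul_X_pow_eq_monomial]
    exact (dvd_pow_self X hi_ne).mul_left _

variable {A : Type*} [Ring A] [Algebra k A]

theorem aeval_truncLogPoly (u : A) : aeval (u - 1) (truncLogPoly k p) = truncLog k p u := by
  simp only [truncLogPoly, truncLog, map_sum, aeval_monomial, Algebra.smul_def]

theorem truncLog_nilpotent_general {u : A} {n : ℕ} (hu : (u - 1) ^ n = 0) :
    truncLog k p u ^ n = 0 := by
  rw [← aeval_truncLogPoly]
  exact map_pow_eq_zero_of_dvd (aeval (u - 1)) (X_dvd_truncLogPoly k p) (by rwa [aeval_X])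

end

/-- The truncated logarithm of a `p`-unipotent element is `p`-nilpotent. -/
theorem truncLog_nilpotent {k A : Type*} [Field k] [Ring A] [Algebra k A]
    (p : ℕ) [Fact p.Prime] [CharP k p] (u : A) (hu : (u - 1) ^ p = 0) :
    (truncLog k p u) ^ p = 0 :=
  truncLog_nilpotent_general k p hu
end

section
/- Let A be an associative unital algebra over a field k of prime characteristic p, and let x ∈ A with x^p = 0. Then L(E(x)) = x, where E is the truncated exponential and L the truncated logarithm. -/
/-!
The identity is the evaluation at `x` of the congruence `L(E(X)) ≡ X` modulo `X ^ p` in `k[X]`,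
which follows by differentiating. Write `e = E(X)`. The derivative of `E` is `E` without its top
term, so `e' ≡ e` modulo `X ^ (p - 1)`; that of `L` at `e` is the truncation of the geometric series
for `1 / e = 1 / (1 - (1 - e))`. Hence the derivative of `L(E(X))` is
`(∑_{j < p - 1} (1 - e) ^ j) e' ≡ 1 - (1 - e) ^ (p - 1) ≡ 1` modulo `X ^ (p - 1)`, because `X`
divides `1 - e`. As `1, …, p - 1` are invertible in `k`, integrating this congruence gives the
claim.
-/

/-- The truncated exponential `E(x) = ∑_{i=0}^{p-1} (1/i!) x^i`. -/
noncomputable def truncExp (k : Type*) [Field k] {A : Type*} [Ring A] [Algebra k A]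
    (p : ℕ) (x : A) : A :=
  ∑ i ∈ Finset.range p, ((Nat.factorial i : k))⁻¹ • x ^ i


open Polynomial
open scoped Nat

lemma isUnit_natCast_of_isUnit_natCast_factorial {R : Type*} [CommSemiring R] {m n : ℕ}
    (hn : IsUnit (n ! : R)) (hm : 0 < m) (hmn : m ≤ n) : IsUnit (m : R) :=
  isUnit_of_dvd_unit (Nat.cast_dvd_cast (Nat.dvd_factorial hm hmn)) hn

lemma X_pow_succ_dvd_of_X_pow_dvd_derivative {R : Type*} [CommSemiring R] {n : ℕ}
    (hn : IsUnit (n ! : R)) {f : R[X]} (hf : X ∣ f) (hf' : X ^ n ∣ derivative f) :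
    X ^ (n + 1) ∣ f := by
  rw [X_pow_dvd_iff] at hf' ⊢
  rintro (_ | d) hd
  · exact X_dvd_iff.mp hf
  · have hd_unit : IsUnit ((d + 1 : ℕ) : R) :=
      isUnit_natCast_of_isUnit_natCast_factorial hn d.succ_pos (by omega)
    have hcoeff : f.coeff (d + 1) * ((d + 1 : ℕ) : R) = 0 := by
      rw [Nat.cast_succ, ← coeff_derivative]
      exact hf' d (by omega)
    exact hd_unit.mul_left_eq_zero.mp hcoeff

section Ring

variable {k A B : Type*} [Field k] [Ring A] [Algebra k A] [Ring B] [Algebra k B]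

lemma map_truncExp (f : A →ₐ[k] B) (n : ℕ) (x : A) :
    f (truncExp k n x) = truncExp k n (f x) := by
  simp [truncExp]

lemma map_truncLog (f : A →ₐ[k] B) (n : ℕ) (u : A) :
    f (truncLog k n u) = truncLog k n (f u) := by
  simp [truncLog]

lemma truncExp_succ (n : ℕ) (x : A) :
    truncExp k (n + 1) x = truncExp k n x + (n ! : k)⁻¹ • x ^ n :=
  Finset.sum_range_succ _ _

lemma truncLog_succ_eq_neg_sum (n : ℕ) (u : A) :
    truncLog k (n + 1) u = -∑ i ∈ Finset.range n, ((i + 1 : ℕ) : k)⁻¹ • (1 - u) ^ (i + 1) := by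
  have hIcc : Finset.Icc 1 n = Finset.Ico (0 + 1) (n + 1) := by ext; simp
  rw [truncLog, Nat.add_sub_cancel, ← Finset.sum_neg_distrib, hIcc, ← Finset.sum_Ico_add',
    Finset.range_eq_Ico]
  refine Finset.sum_congr rfl fun i _ ↦ ?_
  have hsign : (1 - u) ^ (i + 1) = (-1 : k) ^ (i + 1) • (u - 1) ^ (i + 1) := by
    rw [← _root_.smul_pow, neg_one_smul, neg_sub]
  rw [hsign, smul_smul, ← neg_smul, pow_succ _ (i + 1), div_eq_inv_mul, mul_neg_one, mul_neg]

lemma dvd_truncExp_succ_sub_one (n : ℕ) (x : A) : x ∣ truncExp k (n + 1) x - 1 := by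
  have hsplit : truncExp k (n + 1) x - 1 =
      ∑ i ∈ Finset.range n, ((i + 1)! : k)⁻¹ • x ^ (i + 1) := by
    simp [truncExp, Finset.sum_range_succ']
  rw [hsplit]
  exact Finset.dvd_sum fun i _ ↦ dvd_smul_of_dvd _ (dvd_pow_self x i.succ_ne_zero)

lemma sub_one_dvd_truncLog (n : ℕ) (u : A) : u - 1 ∣ truncLog k n u :=
  Finset.dvd_sum fun _ hi ↦ dvd_smul_of_dvd _ <|
    dvd_pow_self _ (Nat.one_le_iff_ne_zero.mp (Finset.mem_Icc.mp hi).1)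

end Ring

section CommRing

variable {k R M : Type*} [Field k] [CommRing R] [Algebra k R] [AddCommGroup M] [Module k M]
  [Module R M]

lemma derivation_truncExp_succ [IsScalarTower k R M] {n : ℕ} (hn : IsUnit (n ! : k))
    (D : Derivation k R M) (x : R) :
    D (truncExp k (n + 1) x) = truncExp k n x • D x := by
  rw [truncExp, Finset.sum_range_succ', pow_zero, map_add, D.map_smul, D.map_one_eq_zero,
    smul_zero, add_zero, map_sum, truncExp, Finset.sum_smul]
  refine Finset.sum_congr rfl fun i hi ↦ ?_
  have hi_ne : ((i + 1 : ℕ) : k) ≠ 0 := (isUnit_natCast_of_isUnit_natCast_factorial hn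
    i.succ_pos (Finset.mem_range.mp hi)).ne_zero
  rw [D.map_smul, D.leibniz_pow, Nat.add_sub_cancel, ← Nat.cast_smul_eq_nsmul k, smul_smul,
    Nat.factorial_succ, Nat.cast_mul, mul_inv_rev, inv_mul_cancel_right₀ hi_ne, smul_assoc]

lemma derivation_truncLog_succ {n : ℕ} (hn : IsUnit (n ! : k)) (D : Derivation k R M) (u : R) :
    D (truncLog k (n + 1) u) = (∑ j ∈ Finset.range n, (1 - u) ^ j) • D u := by
  rw [truncLog_succ_eq_neg_sum, map_neg, map_sum, ← Finset.sum_neg_distrib, Finset.sum_smul]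
  refine Finset.sum_congr rfl fun i hi ↦ ?_
  have hi_ne : ((i + 1 : ℕ) : k) ≠ 0 := (isUnit_natCast_of_isUnit_natCast_factorial hn
    i.succ_pos (Finset.mem_range.mp hi)).ne_zero
  rw [D.map_smul, D.leibniz_pow, Nat.add_sub_cancel, ← Nat.cast_smul_eq_nsmul k,
    inv_smul_smul₀ hi_ne, map_sub, D.map_one_eq_zero, zero_sub, smul_neg, neg_neg]

lemma pow_dvd_geom_sum_mul_truncExp_sub_one (n : ℕ) (x : R) :
    x ^ n ∣
      (∑ j ∈ Finset.range n, (1 - truncExp k (n + 1) x) ^ j) * truncExp k n x - 1 := by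
  have hE : truncExp k n x = truncExp k (n + 1) x - (n ! : k)⁻¹ • x ^ n :=
    eq_sub_of_add_eq (truncExp_succ n x).symm
  set e := truncExp k (n + 1) x
  have hgeom : e * ∑ j ∈ Finset.range n, (1 - e) ^ j = 1 - (1 - e) ^ n := by
    simpa using mul_neg_geom_sum (1 - e) n
  have hx : x ∣ 1 - e := dvd_sub_comm.mp (dvd_truncExp_succ_sub_one n x)
  rw [hE, mul_sub, mul_comm _ e, hgeom, sub_right_comm, sub_sub_cancel_left]
  exact dvd_sub (dvd_neg.mpr (pow_dvd_pow_of_dvd hx n))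
    ((dvd_smul_of_dvd _ dvd_rfl).mul_left _)

end CommRing

lemma X_pow_succ_dvd_truncLog_truncExp_X_sub_X {k : Type*} [Field k] {n : ℕ}
    (hn : IsUnit (n ! : k)) :
    (X : k[X]) ^ (n + 1) ∣ truncLog k (n + 1) (truncExp k (n + 1) (X : k[X])) - X := by
  refine X_pow_succ_dvd_of_X_pow_dvd_derivative hn ?_ ?_
  · exact dvd_sub_self_right.mpr <|
      (dvd_truncExp_succ_sub_one n X).trans (sub_one_dvd_truncLog (n + 1) _)
  · rw [derivative_sub, derivative_X, ← derivative'_apply, derivation_truncLog_succ hn,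
      derivation_truncExp_succ hn, derivative'_apply, derivative_X, smul_eq_mul, smul_eq_mul,
      mul_one]
    exact pow_dvd_geom_sum_mul_truncExp_sub_one n X

theorem truncLog_truncExp_general {k A : Type*} [Field k] [Ring A] [Algebra k A] {n : ℕ}
    (hn : IsUnit (n ! : k)) (x : A) (hx : x ^ (n + 1) = 0) :
    truncLog k (n + 1) (truncExp k (n + 1) x) = x := by
  obtain ⟨q, hq⟩ := X_pow_succ_dvd_truncLog_truncExp_X_sub_X hn
  rw [← sub_eq_zero]
  calc truncLog k (n + 1) (truncExp k (n + 1) x) - x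
      = aeval x (truncLog k (n + 1) (truncExp k (n + 1) (X : k[X])) - X) := by
        rw [map_sub, map_truncLog, map_truncExp, aeval_X]
    _ = x ^ (n + 1) * aeval x q := by rw [hq, map_mul, map_pow, aeval_X]
    _ = 0 := by rw [hx, zero_mul]

/-- `L(E(x)) = x` for `p`-nilpotent `x`. -/
theorem truncLog_truncExp {k A : Type*} [Field k] [Ring A] [Algebra k A]
    (p : ℕ) [Fact p.Prime] [CharP k p] (x : A) (hx : x ^ p = 0) :
    truncLog k p (truncExp k p x) = x := by
  obtain ⟨n, rfl⟩ := Nat.exists_eq_succ_of_ne_zero (NeZero.ne p)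
  exact truncLog_truncExp_general
    ((IsUnit.natCast_factorial_iff_of_charP (n + 1)).mpr n.lt_succ_self) x hx
end

section
/- Let k be a field of prime characteristic p, let n, r ≥ 1, and let X_0, …, X_{r−1} be pairwise commuting n × n matrices over k with X_i^p = 0 for all i. Then the map φ : k → Matrix n n k defined by φ(s) = E(s • X_0) * E(s^p • X_1) * ⋯ * E(s^{p^{r−1}} • X_{r−1}) satisfies φ(s + t) = φ(s) * φ(t) for all s, t ∈ k and φ(0) = 1, with each φ(s) invertible; i.e. an r-tuple of commuting p-nilpotent matrices determines a one-parameter additive subgroup of GL_n(k) (the construction underlying the map E_* of Theorem 2.4, for GL_n). -/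
/-!
For commuting `x` and `y`, the product `E(x) * E(y)` is the sum of `(1/i!) x^i * (1/j!) y^j` over
`i, j < p`. If the monomials with `i + j ≥ p` vanish, only total degrees `m < p` remain, and in each
of them the binomial theorem gives `(1/m!) (x + y)^m`, so that `E(x + y) = E(x) * E(y)`. When
`x^p = 0`, this applies to all pairs of scalar multiples of `x`; since `s ↦ s^{p^i}` is additive in
characteristic `p`, every factor of `φ` turns sums into products, and the factors commute.
-/

open Finset
open scoped Nat

lemma sum_range_sum_antidiagonal_eq_sum_range_sum_range {M : Type*} [AddCommMonoid M] (N : ℕ)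
    (f : ℕ → ℕ → M) (hf : ∀ i j, N ≤ i + j → f i j = 0) :
    ∑ m ∈ range N, ∑ ij ∈ antidiagonal m, f ij.1 ij.2 = ∑ i ∈ range N, ∑ j ∈ range N, f i j := by
  calc ∑ m ∈ range N, ∑ ij ∈ antidiagonal m, f ij.1 ij.2
      = ∑ m ∈ range N, ∑ i ∈ range (m + 1), f i (m - i) := by
        simp only [Nat.sum_antidiagonal_eq_sum_range_succ f]
    _ = ∑ i ∈ range N, ∑ j ∈ range (N - i), f i j := sum_range_diag_flip N f
    _ = ∑ i ∈ range N, ∑ j ∈ range N, f i j := by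
        refine sum_congr rfl fun i _ ↦
          sum_subset (range_subset_range.2 (N.sub_le i)) fun j _ hj ↦ hf i j ?_
        rw [mem_range] at hj
        omega

lemma list_prod_map_mul_of_pairwise_commute {ι M : Type*} [Monoid M] {l : List ι} {f g : ι → M}
    (h : l.Pairwise fun i j ↦ Commute (g i) (f j)) :
    (l.map fun i ↦ f i * g i).prod = (l.map f).prod * (l.map g).prod := by
  induction l with
  | nil => simp
  | cons i l ih =>
    obtain ⟨hi, hl⟩ := List.pairwise_cons.1 h
    have hcomm : Commute (g i) (l.map f).prod :=
      Commute.list_prod_right _ _ (List.forall_mem_map.2 hi)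
    simp only [List.map_cons, List.prod_cons, ih hl]
    exact (hcomm.symm.mul_mul_mul_comm _ _).symm

section TruncExp

variable {k A : Type*} [Field k] [Ring A] [Algebra k A]

lemma inv_factorial_smul_add_pow {m : ℕ} (hm : IsUnit (m ! : k)) {x y : A} (h : Commute x y) :
    (m ! : k)⁻¹ • (x + y) ^ m =
      ∑ ij ∈ antidiagonal m, ((ij.1 ! : k)⁻¹ • x ^ ij.1) * ((ij.2 ! : k)⁻¹ • y ^ ij.2) := by
  rw [h.add_pow', smul_sum]
  refine sum_congr rfl fun ⟨i, j⟩ hij ↦ ?_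
  obtain rfl : i + j = m := mem_antidiagonal.1 hij
  have hcoeff : ((i + j)! : k)⁻¹ * ((i + j).choose i : k) = (i ! : k)⁻¹ * (j ! : k)⁻¹ := by
    have hi : (i ! : k) ≠ 0 := (hm.natCast_factorial_of_le (Nat.le_add_right i j)).ne_zero
    have hj : (j ! : k) ≠ 0 := (hm.natCast_factorial_of_le (Nat.le_add_left j i)).ne_zero
    have hchoose : ((i + j).choose i : k) * i ! * j ! = (i + j)! := by
      rw [Nat.choose_symm_add]
      exact_mod_cast congrArg (Nat.cast : ℕ → k) (Nat.add_choose_mul_factorial_mul_factorial i j)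
    have hadd : ((i + j)! : k) ≠ 0 := hm.ne_zero
    field_simp
    linear_combination hchoose
  rw [← Nat.cast_smul_eq_nsmul k, smul_smul, hcoeff, smul_mul_smul_comm]

lemma truncExp_zero (p : ℕ) [NeZero p] : truncExp k p (0 : A) = 1 := by
  rw [truncExp, sum_eq_single_of_mem 0 (mem_range.2 (NeZero.pos p)) fun i _ hi ↦ by simp [hi]]
  simp

lemma truncExp_add_of_commute {N : ℕ} (hN : IsUnit ((N - 1)! : k)) {x y : A} (h : Commute x y)
    (hxy : ∀ i j, N ≤ i + j → x ^ i * y ^ j = 0) :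
    truncExp k N (x + y) = truncExp k N x * truncExp k N y := by
  let f (i j : ℕ) : A := ((i ! : k)⁻¹ • x ^ i) * ((j ! : k)⁻¹ • y ^ j)
  have hf (i j : ℕ) (hij : N ≤ i + j) : f i j = 0 := by
    simp only [f, smul_mul_smul_comm, hxy i j hij, smul_zero]
  calc truncExp k N (x + y)
      = ∑ m ∈ range N, ∑ ij ∈ antidiagonal m, f ij.1 ij.2 :=
        sum_congr rfl fun m hm ↦
          inv_factorial_smul_add_pow (hN.natCast_factorial_of_lt (mem_range.1 hm)) h
    _ = ∑ i ∈ range N, ∑ j ∈ range N, f i j :=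
        sum_range_sum_antidiagonal_eq_sum_range_sum_range N f hf
    _ = truncExp k N x * truncExp k N y := (sum_mul_sum _ _ _ _).symm

lemma truncExp_add_smul {N : ℕ} (hN : IsUnit ((N - 1)! : k)) {x : A} (hx : x ^ N = 0) (a b : k) :
    truncExp k N ((a + b) • x) = truncExp k N (a • x) * truncExp k N (b • x) := by
  rw [add_smul]
  refine truncExp_add_of_commute hN (((Commute.refl x).smul_left a).smul_right b) fun i j hij ↦ ?_
  rw [smul_pow, smul_pow, smul_mul_smul_comm, ← pow_add, pow_eq_zero_of_le hij hx, smul_zero]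

lemma commute_truncExp_truncExp (M N : ℕ) {x y : A} (h : Commute x y) :
    Commute (truncExp k M x) (truncExp k N y) :=
  Commute.sum_left _ _ _ fun i _ ↦ Commute.sum_right _ _ _ fun j _ ↦
    ((h.pow_pow i j).smul_left _).smul_right _

/-- The map `φ(s) = E(s • X₀) * E(s^p • X₁) * ⋯ * E(s^{p^{r-1}} • X_{r-1})` attached to an `r`-tuple
`X`. As `A` need not be commutative, the factors are multiplied in the order of their indices. -/
noncomputable def oneParameterMap (p : ℕ) {r : ℕ} (X : Fin r → A) (s : k) : A :=
  (List.ofFn fun i : Fin r ↦ truncExp k p (s ^ p ^ (i : ℕ) • X i)).prod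

lemma oneParameterMap_zero (p : ℕ) [NeZero p] {r : ℕ} (X : Fin r → A) :
    oneParameterMap p X (0 : k) = 1 := by
  simp [oneParameterMap, truncExp_zero, NeZero.ne p]

variable (p : ℕ) [Fact p.Prime] [CharP k p] {r : ℕ} {X : Fin r → A}

lemma oneParameterMap_add (hcomm : Pairwise fun i j ↦ Commute (X i) (X j))
    (hX : ∀ i, X i ^ p = 0) (s t : k) :
    oneParameterMap p X (s + t) = oneParameterMap p X s * oneParameterMap p X t := by
  have hfac : IsUnit ((p - 1)! : k) :=
    (IsUnit.natCast_factorial_iff_of_charP p).2 (Nat.sub_one_lt (NeZero.ne p))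
  simp only [oneParameterMap, List.ofFn_eq_map, add_pow_char_pow, truncExp_add_smul hfac (hX _)]
  exact list_prod_map_mul_of_pairwise_commute <| (List.nodup_finRange r).imp fun hij ↦
    commute_truncExp_truncExp p p (((hcomm hij).smul_left _).smul_right _)

lemma isUnit_oneParameterMap (hcomm : Pairwise fun i j ↦ Commute (X i) (X j))
    (hX : ∀ i, X i ^ p = 0) (s : k) : IsUnit (oneParameterMap p X s) := by
  refine isUnit_iff_exists.2 ⟨oneParameterMap p X (-s), ?_, ?_⟩
  · rw [← oneParameterMap_add p hcomm hX, add_neg_cancel, oneParameterMap_zero]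
  · rw [← oneParameterMap_add p hcomm hX, neg_add_cancel, oneParameterMap_zero]

end TruncExp

theorem commuting_nilpotents_oneParameter_general {k A : Type*} [Field k] [Ring A] [Algebra k A]
    (p : ℕ) [Fact p.Prime] [CharP k p] {r : ℕ} (X : Fin r → A)
    (hcomm : Pairwise fun i j ↦ Commute (X i) (X j)) (hX : ∀ i, X i ^ p = 0) :
    (∀ s t : k, oneParameterMap p X (s + t) = oneParameterMap p X s * oneParameterMap p X t) ∧
    oneParameterMap p X (0 : k) = 1 ∧
    ∀ s : k, IsUnit (oneParameterMap p X s) :=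
  ⟨oneParameterMap_add p hcomm hX, oneParameterMap_zero p X, isUnit_oneParameterMap p hcomm hX⟩

/-- An `r`-tuple of commuting `p`-nilpotent matrices defines a one-parameter additive
subgroup `s ↦ E(s • X₀) * E(s^p • X₁) * ⋯ * E(s^{p^{r-1}} • X_{r-1})` of `GL_n`. -/
theorem commuting_nilpotents_oneParameter {k : Type*} [Field k]
    (p : ℕ) [Fact p.Prime] [CharP k p] (n r : ℕ) (hn : 1 ≤ n) (hr : 1 ≤ r)
    (X : Fin r → Matrix (Fin n) (Fin n) k)
    (hcomm : ∀ i j, X i * X j = X j * X i) (hX : ∀ i, (X i) ^ p = 0) :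
    (∀ s t : k,
      (List.ofFn fun i : Fin r => truncExp k p ((s + t) ^ p ^ (i : ℕ) • X i)).prod
        = (List.ofFn fun i : Fin r => truncExp k p (s ^ p ^ (i : ℕ) • X i)).prod *
          (List.ofFn fun i : Fin r => truncExp k p (t ^ p ^ (i : ℕ) • X i)).prod) ∧
    (List.ofFn fun i : Fin r => truncExp k p ((0 : k) ^ p ^ (i : ℕ) • X i)).prod = 1 ∧
    (∀ s : k,
      IsUnit (List.ofFn fun i : Fin r => truncExp k p (s ^ p ^ (i : ℕ) • X i)).prod) :=
  commuting_nilpotents_oneParameter_general p X (fun i j _ ↦ hcomm i j) hX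
end

section
/- Let k be an infinite field of prime characteristic p, let n, r ≥ 1, and let (X_0, …, X_{r−1}) and (Y_0, …, Y_{r−1}) be two r-tuples of pairwise commuting n × n matrices over k with X_i^p = 0 and Y_i^p = 0 for all i. If E(s • X_0) * E(s^p • X_1) * ⋯ * E(s^{p^{r−1}} • X_{r−1}) = E(s • Y_0) * E(s^p • Y_1) * ⋯ * E(s^{p^{r−1}} • Y_{r−1}) for every s ∈ k, then X_i = Y_i for all i. (This is the injectivity of the map E_* in Theorem 2.4, for GL_n.) -/
section Digits

open Polynomial

variable {R A : Type*} [CommSemiring R] [Semiring A] [Algebra R A]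

lemma natDegree_aeval_monomial_le (f : R[X]) (n : ℕ) (x : A) :
    (aeval (monomial n x) f).natDegree ≤ n * f.natDegree := by
  rw [aeval_eq_sum_range]
  refine natDegree_sum_le_of_forall_le _ _ fun i hi => ?_
  calc (f.coeff i • (monomial n x) ^ i).natDegree
      ≤ ((monomial n x) ^ i).natDegree := natDegree_smul_le _ _
    _ = (monomial (n * i) (x ^ i)).natDegree := by rw [monomial_pow]
    _ ≤ n * i := natDegree_monomial_le _
    _ ≤ n * f.natDegree := Nat.mul_le_mul_left n (Finset.mem_range_succ_iff.mp hi)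

/-- There are no carries: `a + n * b = a' + n * i` with `a, a' < n` forces `i = b`. -/
lemma coeff_mul_aeval_monomial {P : A[X]} {n a : ℕ} (hP : P.natDegree < n) (ha : a < n)
    (f : R[X]) (x : A) (b : ℕ) :
    (P * aeval (monomial n x) f).coeff (a + n * b) = f.coeff b • (P.coeff a * x ^ b) := by
  have coeff_term (i : ℕ) : (P * f.coeff i • (monomial n x) ^ i).coeff (a + n * b)
      = if i = b then f.coeff b • (P.coeff a * x ^ b) else 0 := by
    rw [mul_smul_comm, coeff_smul, monomial_pow, ← C_mul_X_pow_eq_monomial, ← mul_assoc,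
      coeff_mul_X_pow', coeff_mul_C]
    rcases lt_trichotomy i b with hib | rfl | hbi
    · have : n * (i + 1) ≤ n * b := Nat.mul_le_mul_left n hib
      rw [coeff_eq_zero_of_natDegree_lt (n := a + n * b - n * i) (by lia)]
      simp [hib.ne]
    · simp
    · have : n * (b + 1) ≤ n * i := Nat.mul_le_mul_left n hbi
      rw [if_neg (by lia), if_neg hbi.ne', smul_zero]
  rw [aeval_eq_sum_range, Finset.mul_sum, finsetSum_coeff]
  simp_rw [coeff_term]
  rw [Finset.sum_ite_eq']
  split_ifs with hb
  · rfl
  · rw [coeff_eq_zero_of_natDegree_lt (by simpa using hb), zero_smul]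

/-- The polynomial `f(T x₀) * f(T^q x₁) * ⋯ * f(T^{q^{r-1}} x_{r-1})` in a variable `T` commuting
with `A`: it makes the product of the `f(s^{q^i} • x_i)` a polynomial function of the scalar `s`.
The factor `f(T^m x)` is encoded as `aeval (monomial m x) f`. -/
noncomputable def twistedProduct (f : R[X]) (q : ℕ) {r : ℕ} (x : Fin r → A) : A[X] :=
  (List.ofFn fun i : Fin r => aeval (monomial (q ^ (i : ℕ)) (x i)) f).prod

lemma eval_algebraMap_twistedProduct (f : R[X]) (q : ℕ) {r : ℕ} (x : Fin r → A) (s : R) :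
    (twistedProduct f q x).eval (algebraMap R A s)
      = (List.ofFn fun i : Fin r => aeval (s ^ q ^ (i : ℕ) • x i) f).prod := by
  let φ : A[X] →ₐ[R] A :=
    eval₂AlgHom (AlgHom.id R A) (algebraMap R A s) fun a => Algebra.commute_algebraMap_right s a
  have φ_monomial (m : ℕ) (y : A) : φ (monomial m y) = s ^ m • y := by
    rw [Algebra.smul_def, Algebra.commutes, map_pow]
    exact eval₂_monomial _ _
  change φ (twistedProduct f q x) = _
  simp_rw [twistedProduct, map_list_prod, List.map_ofFn, Function.comp_def,
    ← aeval_algHom_apply, φ_monomial]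

lemma twistedProduct_succ (f : R[X]) (q : ℕ) {r : ℕ} (x : Fin (r + 1) → A) :
    twistedProduct f q x
      = twistedProduct f q (Fin.init x) * aeval (monomial (q ^ r) (x (Fin.last r))) f := by
  rw [twistedProduct, List.ofFn_succ', List.prod_concat]
  rfl

lemma natDegree_twistedProduct_lt {f : R[X]} {q : ℕ} (hf : f.natDegree < q) {r : ℕ}
    (x : Fin r → A) : (twistedProduct f q x).natDegree < q ^ r := by
  induction r with
  | zero => simp [twistedProduct]
  | succ r ih =>
    calc (twistedProduct f q x).natDegree
        ≤ (twistedProduct f q (Fin.init x)).natDegree + q ^ r * f.natDegree := by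
          rw [twistedProduct_succ]
          exact natDegree_mul_le_of_le le_rfl (natDegree_aeval_monomial_le _ _ _)
      _ < q ^ r + q ^ r * f.natDegree := Nat.add_lt_add_right (ih _) _
      _ = q ^ r * (f.natDegree + 1) := by ring
      _ ≤ q ^ r * q := Nat.mul_le_mul_left _ hf
      _ = q ^ (r + 1) := (pow_succ q r).symm

lemma coeff_zero_twistedProduct {f : R[X]} {q : ℕ} (hf : f.natDegree < q) (hf₀ : f.coeff 0 = 1)
    {r : ℕ} (x : Fin r → A) : (twistedProduct f q x).coeff 0 = 1 := by
  induction r with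
  | zero => simp [twistedProduct]
  | succ r ih =>
    have := coeff_mul_aeval_monomial (natDegree_twistedProduct_lt hf (Fin.init x))
      (pow_pos (Nat.zero_lt_of_lt hf) r) f (x (Fin.last r)) 0
    simpa [← twistedProduct_succ, ih, hf₀] using this

lemma coeff_pow_twistedProduct {f : R[X]} {q : ℕ} (hf : f.natDegree < q) (hq : 1 < q)
    (hf₀ : f.coeff 0 = 1) {r : ℕ} (x : Fin r → A) (j : Fin r) :
    (twistedProduct f q x).coeff (q ^ (j : ℕ)) = f.coeff 1 • x j := by
  induction r with
  | zero => exact j.elim0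
  | succ r ih =>
    have coeff_digits {a : ℕ} (ha : a < q ^ r) := coeff_mul_aeval_monomial
      (natDegree_twistedProduct_lt hf (Fin.init x)) ha f (x (Fin.last r))
    simp_rw [← twistedProduct_succ] at coeff_digits
    cases j using Fin.lastCases with
    | last =>
      simpa [coeff_zero_twistedProduct hf hf₀] using coeff_digits (pow_pos (by lia) r) 1
    | cast i =>
      simpa [ih, hf₀, Fin.init] using coeff_digits (Nat.pow_lt_pow_right hq i.isLt) 0

lemma eq_of_forall_eval_algebraMap_eq {k A : Type*} [Field k] [Infinite k] [Ring A] [Algebra k A]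
    {P Q : A[X]} (h : ∀ s : k, P.eval (algebraMap k A s) = Q.eval (algebraMap k A s)) :
    P = Q := by
  let D := P - Q
  suffices D = 0 from sub_eq_zero.mp this
  have eval_D (s : k) : D.eval (algebraMap k A s) = 0 := by rw [eval_sub, h, sub_self]
  ext m
  rw [coeff_zero, ← Module.forall_dual_apply_eq_zero_iff k]
  intro φ
  let φD : k[X] := ∑ i ∈ Finset.range (D.natDegree + 1), monomial i (φ (D.coeff i))
  have coeff_φD : φD.coeff m = φ (D.coeff m) := by
    simp +contextual [φD, finsetSum_coeff, coeff_monomial, coeff_eq_zero_of_natDegree_lt]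
  have eval_φD (s : k) : φD.eval s = φ (D.eval (algebraMap k A s)) := by
    rw [eval_eq_sum_range (p := D), eval_finsetSum, map_sum]
    refine Finset.sum_congr rfl fun i _ => ?_
    rw [eval_monomial, ← map_pow, ← Algebra.commutes, ← Algebra.smul_def, map_smul, smul_eq_mul,
      mul_comm]
  have φD_eq_zero : φD = 0 := Polynomial.funext fun s => by simp [eval_φD, eval_D]
  rw [← coeff_φD, φD_eq_zero, coeff_zero]

theorem commuting_nilpotents_injective_general {k A : Type*} [Field k] [Infinite k] [Ring A]
    [Algebra k A] {f : k[X]} {q : ℕ} (hf : f.natDegree < q) (hf₀ : f.coeff 0 = 1)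
    (hf₁ : f.coeff 1 ≠ 0) {r : ℕ} {x y : Fin r → A}
    (heq : ∀ s : k, (List.ofFn fun i : Fin r => aeval (s ^ q ^ (i : ℕ) • x i) f).prod
      = (List.ofFn fun i : Fin r => aeval (s ^ q ^ (i : ℕ) • y i) f).prod) :
    x = y := by
  have hq : 1 < q := (le_natDegree_of_ne_zero hf₁).trans_lt hf
  have twistedProduct_eq : twistedProduct f q x = twistedProduct f q y :=
    eq_of_forall_eval_algebraMap_eq fun s : k => by
      rw [eval_algebraMap_twistedProduct, eval_algebraMap_twistedProduct, heq]
  funext j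
  apply smul_right_injective A hf₁
  calc f.coeff 1 • x j = (twistedProduct f q x).coeff (q ^ (j : ℕ)) :=
        (coeff_pow_twistedProduct hf hq hf₀ x j).symm
    _ = (twistedProduct f q y).coeff (q ^ (j : ℕ)) := by rw [twistedProduct_eq]
    _ = f.coeff 1 • y j := coeff_pow_twistedProduct hf hq hf₀ y j

end Digits

section TruncExp

open Polynomial

variable {k A : Type*} [Field k] [Ring A] [Algebra k A]

lemma aeval_truncExp_X (p : ℕ) (x : A) : aeval x (truncExp k p (X : k[X])) = truncExp k p x := by
  simp [truncExp]

lemma coeff_truncExp_X {p i : ℕ} (hi : i < p) :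
    (truncExp k p (X : k[X])).coeff i = (i.factorial : k)⁻¹ := by
  simp [truncExp, finsetSum_coeff, coeff_X_pow, hi]

lemma natDegree_truncExp_X_lt {p : ℕ} (hp : 0 < p) :
    (truncExp k p (X : k[X])).natDegree < p := by
  refine Nat.lt_of_le_pred hp (natDegree_sum_le_of_forall_le _ _ fun i hi => ?_)
  exact ((natDegree_smul_le _ _).trans (natDegree_X_pow_le i)).trans
    (Nat.le_pred_of_lt (Finset.mem_range.mp hi))

end TruncExp

/-- Injectivity of `E_*` for `GL_n`: two `r`-tuples of pairwise commuting `p`-nilpotent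
matrices defining the same one-parameter subgroup are equal. -/
theorem commuting_nilpotents_injective {k : Type*} [Field k] [Infinite k]
    (p : ℕ) [Fact p.Prime] [CharP k p] (n r : ℕ) (hn : 1 ≤ n) (hr : 1 ≤ r)
    (X Y : Fin r → Matrix (Fin n) (Fin n) k)
    (hcommX : ∀ i j, X i * X j = X j * X i) (hcommY : ∀ i j, Y i * Y j = Y j * Y i)
    (hX : ∀ i, (X i) ^ p = 0) (hY : ∀ i, (Y i) ^ p = 0)
    (heq : ∀ s : k,
      (List.ofFn fun i : Fin r => truncExp k p (s ^ p ^ (i : ℕ) • X i)).prod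
        = (List.ofFn fun i : Fin r => truncExp k p (s ^ p ^ (i : ℕ) • Y i)).prod) :
    X = Y := by
  have hp : 1 < p := (Fact.out : p.Prime).one_lt
  exact commuting_nilpotents_injective_general (f := truncExp k p Polynomial.X)
    (natDegree_truncExp_X_lt hp.pos) (by simp [coeff_truncExp_X hp.pos])
    (by simp [coeff_truncExp_X hp]) (by simpa only [aeval_truncExp_X] using heq)
end

section
/- Let k be a field of characteristic p > 2. The operation (a,b)·(c,d) = (a+c, b+d+(1/2)(a^p c − a c^p)) makes the set k × k into a group with identity element (0,0) and with the inverse of (a,b) equal to (−a,−b). Moreover, if there exists a ∈ k with a^p ≠ a (for instance if k is algebraically closed), then this group is nonabelian. -/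
/-!
An alternating biadditive map `φ : A × A → B` is a 2-cocycle, so
`(a, b)(c, d) = (a + c, b + d + φ(a, c))` is a group law on `A × B`, and alternation makes the
inverse the componentwise negation. For `σ` additive, `φ(a, c) = t(σ(a)c - aσ(c))` is such a map;
the Frobenius endomorphism and `t = 1/2` give the fake Heisenberg law, for which `(a, 0)` and
`(1, 0)` commute exactly when `aᵖ = a`.
-/

section TwistedMul

variable {A B : Type*}

/-- The multiplication on `A × B` of the central extension of `A` by `B` with cocycle `φ`.
A plain function, since `A × B` may already carry a componentwise product. -/
def twistedMul [AddMonoid A] [AddCommMonoid B] (φ : A →+ A →+ B) (x y : A × B) : A × B :=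
  (x.1 + y.1, x.2 + y.2 + φ x.1 y.1)

theorem twistedMul_assoc [AddMonoid A] [AddCommMonoid B] (φ : A →+ A →+ B) (x y z : A × B) :
    twistedMul φ (twistedMul φ x y) z = twistedMul φ x (twistedMul φ y z) := by
  refine Prod.ext (add_assoc _ _ _) ?_
  simp only [twistedMul, map_add, AddMonoidHom.add_apply]
  abel

theorem zero_twistedMul [AddMonoid A] [AddCommMonoid B] (φ : A →+ A →+ B) (x : A × B) :
    twistedMul φ 0 x = x := by
  simp [twistedMul]

theorem neg_twistedMul_self [AddGroup A] [AddCommGroup B] {φ : A →+ A →+ B}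
    (hφ : ∀ a, φ a a = 0) (x : A × B) : twistedMul φ (-x) x = 0 := by
  simp [twistedMul, hφ]

theorem twistedMul_comm_iff [AddCommMonoid A] [AddCommMonoid B] [IsLeftCancelAdd B]
    (φ : A →+ A →+ B) (x y : A × B) :
    twistedMul φ x y = twistedMul φ y x ↔ φ x.1 y.1 = φ y.1 x.1 := by
  simp [twistedMul, Prod.ext_iff, add_comm y.1, add_comm y.2]

/-- The central extension of `A` by `B` with alternating cocycle `φ`, as a group structure on the
set `A × B`. It is not an instance, as it depends on `φ`. -/
abbrev twistedGroup [AddGroup A] [AddCommGroup B] (φ : A →+ A →+ B) (hφ : ∀ a, φ a a = 0) :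
    Group (A × B) :=
  letI : Mul (A × B) := ⟨twistedMul φ⟩
  letI : Inv (A × B) := ⟨fun x => -x⟩
  letI : One (A × B) := ⟨0⟩
  Group.ofLeftAxioms (twistedMul_assoc φ) (zero_twistedMul φ) (neg_twistedMul_self hφ)

end TwistedMul

section SkewPairing

variable {R : Type*} [CommRing R] (σ : R →+ R) (t : R)

/-- The alternating biadditive map `(a, c) ↦ t (σ(a) c - a σ(c))` attached to an additive
endomorphism `σ`; the fake Heisenberg cocycle is the case of Frobenius and `t = 1 / 2`. -/
def skewPairing : R →+ R →+ R :=
  AddMonoidHom.mk'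
    (fun a => AddMonoidHom.mk' (fun c => t * (σ a * c - a * σ c)) fun c d => by
      rw [map_add]; ring)
    fun a b => by
      ext c
      simp only [AddMonoidHom.mk'_apply, AddMonoidHom.add_apply, map_add]
      ring

theorem skewPairing_apply (a c : R) : skewPairing σ t a c = t * (σ a * c - a * σ c) :=
  rfl

theorem skewPairing_self_eq_zero (a : R) : skewPairing σ t a a = 0 := by
  rw [skewPairing_apply, mul_comm a, sub_self, mul_zero]

variable {σ t}

theorem skewPairing_one_comm_iff (hσ : σ 1 = 1) (ht : 2 * t = 1) (a : R) :
    skewPairing σ t a 1 = skewPairing σ t 1 a ↔ σ a = a := by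
  have commutator : skewPairing σ t a 1 - skewPairing σ t 1 a = σ a - a := by
    simp only [skewPairing_apply, hσ]
    linear_combination (σ a - a) * ht
  rw [← sub_eq_zero, commutator, sub_eq_zero]

end SkewPairing

theorem fakeHeisenberg_group_general {R : Type*} [CommRing R] {σ : R →+ R} {t : R}
    (hσ : σ 1 = 1) (ht : 2 * t = 1) :
    let mul : R × R → R × R → R × R := fun x y =>
      (x.1 + y.1, x.2 + y.2 + t * (σ x.1 * y.1 - x.1 * σ y.1))
    (∀ x y z : R × R, mul (mul x y) z = mul x (mul y z)) ∧
    (∀ x : R × R, mul (0, 0) x = x) ∧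
    (∀ x : R × R, mul x (0, 0) = x) ∧
    (∀ x : R × R, mul x (-x.1, -x.2) = (0, 0)) ∧
    (∀ x : R × R, mul (-x.1, -x.2) x = (0, 0)) ∧
    ((∃ a : R, σ a ≠ a) → ∃ x y : R × R, mul x y ≠ mul y x) := by
  let G : Group (R × R) := twistedGroup (skewPairing σ t) (skewPairing_self_eq_zero σ t)
  refine ⟨G.mul_assoc, G.one_mul, G.mul_one, @mul_inv_cancel _ G, G.inv_mul_cancel, ?_⟩
  rintro ⟨a, ha⟩
  refine ⟨(a, 0), (1, 0), fun hcomm => ha ?_⟩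
  exact (skewPairing_one_comm_iff hσ ht a).1 ((twistedMul_comm_iff _ (a, 0) (1, 0)).1 hcomm)

/-- The fake Heisenberg group law `(a,b)·(c,d) = (a+c, b+d+(1/2)(aᵖc − acᵖ))` makes
`k × k` into a group with identity `(0,0)` and inverse `(a,b) ↦ (−a,−b)`, which is
nonabelian as soon as some `a ∈ k` satisfies `aᵖ ≠ a`. -/
theorem fakeHeisenberg_group {k : Type*} [Field k] (p : ℕ) [Fact p.Prime] [CharP k p]
    (hp : 2 < p) :
    let mul : k × k → k × k → k × k := fun x y =>
      (x.1 + y.1, x.2 + y.2 + (1 / 2 : k) * (x.1 ^ p * y.1 - x.1 * y.1 ^ p))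
    (∀ x y z : k × k, mul (mul x y) z = mul x (mul y z)) ∧
    (∀ x : k × k, mul ((0 : k), (0 : k)) x = x) ∧
    (∀ x : k × k, mul x ((0 : k), (0 : k)) = x) ∧
    (∀ x : k × k, mul x (-x.1, -x.2) = ((0 : k), (0 : k))) ∧
    (∀ x : k × k, mul (-x.1, -x.2) x = ((0 : k), (0 : k))) ∧
    ((∃ a : k, a ^ p ≠ a) → ∃ x y : k × k, mul x y ≠ mul y x) := by
  have h2 : (2 : k) ≠ 0 := Ring.two_ne_zero (ringChar.eq k p ▸ hp.ne')
  exact fakeHeisenberg_group_general (σ := (frobenius k p : k →+ k)) (map_one (frobenius k p))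
    (mul_one_div_cancel h2)
end

section
/- Let k be a field of prime characteristic p, let r ≥ 1, and let A = k[t]/(t^{p^r}) be the truncated polynomial ring. If u ∈ A lies in the ideal generated by (the image of) t and satisfies u^p ⊗ u = u ⊗ u^p in the tensor product A ⊗_k A, then u^p = 0. (This is the key computation in the fake Heisenberg example showing that f(X^p) = 0 for any Hopf algebra map f : k[H] → k[t]/(t^{p^r}).) -/
/-!
Write `u ^ p = f u`, where `f` is multiplication by the nilpotent element `u ^ (p - 1)`.
Contracting the second tensor factor of `f u ⊗ u = u ⊗ f u` with a linear functional `φ` gives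
`(φ u • f) u = b • u` with `b = φ (f u)`. As `φ u • f` is nilpotent, iterating yields
`b ^ m • u = 0` for some `m`; applying `φ ∘ f` turns this into `b ^ (m + 1) = 0`, so `b = 0`.
Every linear functional therefore vanishes at `f u`.
-/

open TensorProduct

theorem smul_eq_smul_of_tmul_eq_tmul {R M N : Type*} [CommSemiring R]
    [AddCommMonoid M] [Module R M] [AddCommMonoid N] [Module R N] {x x' : M} {y y' : N}
    (h : x ⊗ₜ[R] y = x' ⊗ₜ[R] y') (φ : Module.Dual R N) : φ y • x = φ y' • x' := by
  simpa only [Function.comp_apply, LinearMap.lTensor_tmul, TensorProduct.rid_tmul] using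
    congrArg (TensorProduct.rid R M ∘ φ.lTensor M) h

theorem pow_smul_eq_pow_smul_of_smul_eq_smul {S R X : Type*} [Monoid S] [Monoid R]
    [MulAction S X] [MulAction R X] [SMulCommClass S R X] {s : S} {r : R} {x : X}
    (h : s • x = r • x) (n : ℕ) : s ^ n • x = r ^ n • x := by
  induction n with
  | zero => rw [pow_zero, pow_zero, one_smul, one_smul]
  | succ n ih => rw [pow_succ, mul_smul, h, smul_comm, ih, ← mul_smul, ← pow_succ']

theorem apply_eq_zero_of_isNilpotent_of_tmul_comm {R M : Type*} [CommSemiring R] [IsReduced R]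
    [AddCommMonoid M] [Module R M] [Module.Projective R M] {f : Module.End R M}
    (hf : IsNilpotent f) {x : M} (h : f x ⊗ₜ[R] x = x ⊗ₜ[R] f x) : f x = 0 := by
  refine (Module.forall_dual_apply_eq_zero_iff R (f x)).mp fun φ ↦ ?_
  have eigen : (φ x • f) • x = φ (f x) • x := smul_eq_smul_of_tmul_eq_tmul h φ
  obtain ⟨m, hm⟩ : IsNilpotent (φ x • f) := hf.smul (φ x)
  have pow_smul_eq_zero : φ (f x) ^ m • x = 0 := by
    rw [← pow_smul_eq_pow_smul_of_smul_eq_smul eigen, hm, zero_smul]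
  have pow_succ_eq_zero : φ (f x) ^ (m + 1) = 0 := by
    simpa only [Function.comp_apply, map_smul, map_zero, smul_eq_mul, ← pow_succ] using
      congrArg (φ ∘ f) pow_smul_eq_zero
  exact eq_zero_of_pow_eq_zero pow_succ_eq_zero

theorem isNilpotent_of_mem_span_singleton {R : Type*} [CommSemiring R] {x y : R}
    (hx : IsNilpotent x) (hy : y ∈ Ideal.span {x}) : IsNilpotent y :=
  (Ideal.span_singleton_le_iff_mem (nilradical R)).mpr hx hy

theorem isNilpotent_mk_span_singleton_pow {R : Type*} [CommRing R] (x : R) (n : ℕ) :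
    IsNilpotent (Ideal.Quotient.mk (Ideal.span {x ^ n}) x) :=
  ⟨n, by rw [← map_pow, Ideal.Quotient.mk_singleton_self]⟩

theorem pow_p_eq_zero_of_tmul_symm_general {R A : Type*} [CommSemiring R] [IsReduced R]
    [Semiring A] [Algebra R A] [Module.Projective R A] {n : ℕ} (hn : 2 ≤ n) {u : A}
    (hu : IsNilpotent u) (h : (u ^ n) ⊗ₜ[R] u = u ⊗ₜ[R] (u ^ n)) : u ^ n = 0 := by
  have pow_eq : LinearMap.mulLeft R (u ^ (n - 1)) u = u ^ n :=
    pow_sub_one_mul (by lia) u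
  have nilpotent : IsNilpotent (LinearMap.mulLeft R (u ^ (n - 1))) :=
    (LinearMap.isNilpotent_mulLeft_iff R _).mpr (hu.pow_of_pos (by lia))
  rw [← pow_eq] at h ⊢
  exact apply_eq_zero_of_isNilpotent_of_tmul_comm nilpotent h

/-- In `A = k[t]/(t^{p^r})`, if `u` lies in the ideal generated by `t` and
`u^p ⊗ u = u ⊗ u^p` in `A ⊗[k] A`, then `u^p = 0`. -/
theorem pow_p_eq_zero_of_tmul_symm {k : Type*} [Field k]
    (p : ℕ) [Fact p.Prime] [CharP k p] (r : ℕ) (hr : 1 ≤ r)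
    (u : Polynomial k ⧸ Ideal.span {(Polynomial.X : Polynomial k) ^ p ^ r})
    (hu : u ∈ Ideal.span
      {Ideal.Quotient.mk (Ideal.span {(Polynomial.X : Polynomial k) ^ p ^ r})
        Polynomial.X})
    (h : (u ^ p) ⊗ₜ[k] u = u ⊗ₜ[k] (u ^ p)) :
    u ^ p = 0 :=
  pow_p_eq_zero_of_tmul_symm_general (Fact.out : p.Prime).two_le
    (isNilpotent_of_mem_span_singleton (isNilpotent_mk_span_singleton_pow _ _) hu) h
end

section
/- Let k be a field of characteristic p > 2 and let f₁, f₂ ∈ k[X] be polynomials with f₁(0) = 0 and f₂(0) = 0 such that, as identities in the polynomial ring k[X,Y]: f₁(X+Y) = f₁(X) + f₁(Y) and f₂(X+Y) = f₂(X) + f₂(Y) + (1/2)(f₁(X)^p f₁(Y) − f₁(X) f₁(Y)^p). Then f₁ = 0, and consequently f₂ is additive: f₂(X+Y) = f₂(X) + f₂(Y). (Hence every polynomial group homomorphism from the additive group of k into the fake Heisenberg group has trivial first coordinate and additive second coordinate.) -/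
/-! The left side `f₂(X+Y)` and the sum `f₂(X) + f₂(Y)` are symmetric in `X` and `Y`, whereas
`(1/2)(f₁(X)^p f₁(Y) − f₁(X) f₁(Y)^p)` is antisymmetric. As the characteristic is not `2`, this
term vanishes, so `f₁(X)^p f₁(Y) = f₁(X) f₁(Y)^p`. If `f₁` had degree `d > 0` and leading
coefficient `a`, then the coefficient of `X^(pd) Y^d` would be `a^(p+1)` on the left and `0` on
the right. Hence `f₁` is constant, and `f₁(0) = 0`. -/

section

open Polynomial Polynomial.Bivariate

variable {R : Type*} [CommRing R]

theorem swap_aeval_C_X_add_Y (f : R[X]) :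
    swap (aeval (C X + Y : R[X][Y]) f) = aeval (C X + Y : R[X][Y]) f := by
  rw [← aeval_algHom_apply, map_add, swap_X, swap_Y, add_comm]

theorem aeval_C_X (f : R[X]) : aeval (C X : R[X][Y]) f = C f := by
  rw [← algebraMap_eq, aeval_algebraMap_apply, aeval_X_left_apply]

theorem swap_eq_self_of_aeval_add_eq {f : R[X]} {β : R[X][Y]}
    (h : aeval (C X + Y : R[X][Y]) f = aeval (C X : R[X][Y]) f + aeval (Y : R[X][Y]) f + β) :
    swap β = β := by
  rw [aeval_C_X, aeval_X_left_eq_map, algebraMap_eq] at h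
  have h_swap := congrArg swap h
  rw [swap_aeval_C_X_add_Y, map_add, map_add, swap_C, swap_map_C, h] at h_swap
  linear_combination -h_swap

theorem eq_zero_of_swap_eq_neg_of_swap_C_C_mul_eq {c : R} (hc : IsRegular (2 * c))
    {β : R[X][Y]} (h_anti : swap β = -β)
    (h_symm : swap (C (C c) * β) = C (C c) * β) : β = 0 := by
  have h_two_mul : C (C (2 * c)) * β = 0 := by
    rw [map_mul, swap_C_C, h_anti] at h_symm
    simp only [map_mul, map_ofNat]
    linear_combination -h_symm
  exact hc.left.isSMulRegular.polynomial.polynomial.right_eq_zero_of_smul <|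
    (Algebra.smul_def _ β).trans h_two_mul

theorem natDegree_eq_zero_of_pow_mul_map_C_eq [IsReduced R] {n : ℕ} (hn : n ≠ 1) {f : R[X]}
    (h : C f ^ n * f.map C = C f * f.map C ^ n) : f.natDegree = 0 := by
  by_contra hd
  have h_coeff : f.leadingCoeff ^ (n + 1) =
      f.coeff (n * f.natDegree) * (f ^ n).coeff f.natDegree := by
    have := congrArg (fun q => (q.coeff f.natDegree).coeff (n * f.natDegree)) h
    rw [← C_pow, ← Polynomial.map_pow] at this
    simpa only [coeff_C_mul, coeff_map, coeff_mul_C, coeff_pow_mul_natDegree,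
      coeff_natDegree, ← pow_succ] using this
  have h_zero : f.coeff (n * f.natDegree) * (f ^ n).coeff f.natDegree = 0 := by
    obtain rfl | hn' : n = 0 ∨ 1 < n := by lia
    · rw [pow_zero, coeff_one, if_neg hd, mul_zero]
    · rw [coeff_eq_zero_of_natDegree_lt (by nlinarith [Nat.pos_of_ne_zero hd]), zero_mul]
  have h_lead : f.leadingCoeff = 0 := eq_zero_of_pow_eq_zero (h_coeff.trans h_zero)
  exact hd (by rw [leadingCoeff_eq_zero.mp h_lead, natDegree_zero])

theorem fakeHeisenberg_hom_trivial_general [IsReduced R] {n : ℕ} (hn : n ≠ 1) {c : R}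
    (hc : IsRegular (2 * c)) {f₁ f₂ : R[X]}
    (h : aeval (C X + Y : R[X][Y]) f₂ = aeval (C X : R[X][Y]) f₂ + aeval (Y : R[X][Y]) f₂ +
      C (C c) * (aeval (C X : R[X][Y]) f₁ ^ n * aeval (Y : R[X][Y]) f₁ -
        aeval (C X : R[X][Y]) f₁ * aeval (Y : R[X][Y]) f₁ ^ n)) :
    f₁ = C (f₁.eval 0) ∧
      aeval (C X + Y : R[X][Y]) f₂ = aeval (C X : R[X][Y]) f₂ + aeval (Y : R[X][Y]) f₂ := by
  have h_anti : swap (C f₁ ^ n * f₁.map C - C f₁ * f₁.map C ^ n) =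
      -(C f₁ ^ n * f₁.map C - C f₁ * f₁.map C ^ n) := by
    simp only [map_sub, map_mul, map_pow, swap_C, swap_map_C]
    ring
  have h_symm := swap_eq_self_of_aeval_add_eq h
  rw [aeval_C_X f₁, aeval_X_left_eq_map f₁, algebraMap_eq] at h h_symm
  have h_vanish := eq_zero_of_swap_eq_neg_of_swap_C_C_mul_eq hc h_anti h_symm
  constructor
  · rw [← coeff_zero_eq_eval_zero]
    exact eq_C_of_natDegree_eq_zero
      (natDegree_eq_zero_of_pow_mul_map_C_eq hn (sub_eq_zero.mp h_vanish))
  · rwa [h_vanish, mul_zero, add_zero] at h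

end

/-- Every polynomial group homomorphism `s ↦ (f₁(s), f₂(s))` from the additive group of
`k` (char `p > 2`) into the fake Heisenberg group has trivial first coordinate and
additive second coordinate: if `f₁(X+Y) = f₁(X) + f₁(Y)` and
`f₂(X+Y) = f₂(X) + f₂(Y) + (1/2)(f₁(X)^p f₁(Y) − f₁(X) f₁(Y)^p)` in `k[X][Y]`, with
`f₁(0) = f₂(0) = 0`, then `f₁ = 0` and `f₂` is additive. -/
theorem fakeHeisenberg_hom_trivial {k : Type*} [Field k]
    (p : ℕ) [Fact p.Prime] [CharP k p] (hp : 2 < p) (f₁ f₂ : Polynomial k)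
    (h₁0 : f₁.eval 0 = 0) (h₂0 : f₂.eval 0 = 0)
    (h₁ : Polynomial.aeval
        ((Polynomial.C Polynomial.X + Polynomial.X : Polynomial (Polynomial k))) f₁
      = Polynomial.aeval ((Polynomial.C Polynomial.X : Polynomial (Polynomial k))) f₁
        + Polynomial.aeval ((Polynomial.X : Polynomial (Polynomial k))) f₁)
    (h₂ : Polynomial.aeval
        ((Polynomial.C Polynomial.X + Polynomial.X : Polynomial (Polynomial k))) f₂
      = Polynomial.aeval ((Polynomial.C Polynomial.X : Polynomial (Polynomial k))) f₂
        + Polynomial.aeval ((Polynomial.X : Polynomial (Polynomial k))) f₂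
        + Polynomial.C (Polynomial.C (1 / 2 : k)) *
          ((Polynomial.aeval ((Polynomial.C Polynomial.X : Polynomial (Polynomial k))) f₁) ^ p
              * Polynomial.aeval ((Polynomial.X : Polynomial (Polynomial k))) f₁
            - Polynomial.aeval ((Polynomial.C Polynomial.X : Polynomial (Polynomial k))) f₁
              * (Polynomial.aeval ((Polynomial.X : Polynomial (Polynomial k))) f₁) ^ p)) :
    f₁ = 0 ∧
    Polynomial.aeval
        ((Polynomial.C Polynomial.X + Polynomial.X : Polynomial (Polynomial k))) f₂
      = Polynomial.aeval ((Polynomial.C Polynomial.X : Polynomial (Polynomial k))) f₂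
        + Polynomial.aeval ((Polynomial.X : Polynomial (Polynomial k))) f₂ := by
  have h_two : (2 : k) ≠ 0 := Ring.two_ne_zero (by rw [ringChar.eq k p]; exact hp.ne')
  have h_reg : IsRegular (2 * (1 / 2) : k) := by
    rw [mul_one_div_cancel h_two]; exact isRegular_one
  simpa only [h₁0, map_zero] using fakeHeisenberg_hom_trivial_general (by lia) h_reg h₂
end
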